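/- Let F be a field, t ≥ 2, n ≥ t, H the t×n Hankel matrix in x_1,...,x_{n+t-1}, R = F[x_1,...,x_{n+t-1}]/I_t(H), and let p be the ideal of R generated by the (t-1)×(t-1) minors of the first t-1 rows of H. Then R/p is isomorphic to a polynomial ring in one variable over the (t-1)×n Hankel determinantal ring; consequently p is a prime ideal of R of height 1. -/

import Mathlib

set_option synthInstance.maxHeartbeats 1000000
set_option maxHeartbeats 1000000

open MvPolynomial Matrix

/-!
Put `m = t - 1`. Substituting `x_k ↦ ∑_{j < m} y_j z_j ^ k` kills the ideal of `t`-minors, since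
the Hankel matrix then has rank at most `m`. Modulo the minors every polynomial is a combination
of standard monomials (Plücker-type straightening), and a weight argument shows that the images of
these are independent. So over a domain the ideal of maximal minors is the kernel of the
substitution, hence prime.

The minors of the first `t - 1` rows do not involve the last variable, so `R / p` is a polynomial
ring over the smaller Hankel determinantal ring; in particular `p` is prime. For its height let
`Δ ∈ p` be the leading minor. A prime `q ⊆ p` containing `Δ` must be `p`: modulo `q` the rows of
`Δ` satisfy a linear relation, i.e. a linear recurrence for the variables, and it propagates to all
columns because the `t`-minors vanish while the leading minor of size `t - 2` does not. So `p` is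
minimal over `Δ ≠ 0` and Krull's theorem gives height `1`.
-/

theorem det_mul_eq_zero_of_card_lt {m n A : Type*} [Fintype m] [DecidableEq m] [Fintype n]
    [CommRing A] (M : Matrix m n A) (N : Matrix n m A)
    (h : Fintype.card n < Fintype.card m) : (M * N).det = 0 := by
  classical
  rw [det_eq_sign_charpoly_coeff, charpoly_mul_comm_of_le _ _ h.le, Polynomial.coeff_X_pow_mul',
    if_neg (by omega), mul_zero]

section HankelIdeal

variable {A B : Type*} [CommRing A] [CommRing B]

/-- The minor of the Hankel matrix `(x (i + j))` on its first `t` rows and the columns `g`. -/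
def hankelMinor (x : ℕ → A) {t : ℕ} (g : Fin t → ℕ) : A :=
  (Matrix.of fun i j : Fin t => x (i + g j)).det

/-- The ideal of maximal minors of the `t × n` Hankel matrix `(x (i + j))`. The entries are read off
a sequence in an arbitrary ring, so that the ideal can be moved along ring homomorphisms. -/
def hankelIdeal (x : ℕ → A) (t n : ℕ) : Ideal A :=
  Ideal.span (Set.range fun g : Fin t → Fin n => hankelMinor x fun j => g j)

theorem map_hankelMinor (f : A →+* B) (x : ℕ → A) {t : ℕ} (g : Fin t → ℕ) :
    f (hankelMinor x g) = hankelMinor (fun k => f (x k)) g := by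
  rw [hankelMinor, RingHom.map_det]
  rfl

theorem map_hankelIdeal (f : A →+* B) (x : ℕ → A) (t n : ℕ) :
    (hankelIdeal x t n).map f = hankelIdeal (fun k => f (x k)) t n := by
  simp only [hankelIdeal, Ideal.map_span, ← Set.range_comp, Function.comp_def, map_hankelMinor]

theorem hankelMinor_congr {x y : ℕ → A} {t : ℕ} {g : Fin t → ℕ}
    (h : ∀ i j : Fin t, x (i + g j) = y (i + g j)) : hankelMinor x g = hankelMinor y g :=
  congrArg Matrix.det (Matrix.ext h)

theorem hankelIdeal_congr {x y : ℕ → A} {t n : ℕ} (h : ∀ k, k + 1 < t + n → x k = y k) :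
    hankelIdeal x t n = hankelIdeal y t n := by
  unfold hankelIdeal
  congr 2 with g
  exact hankelMinor_congr fun i j => h _ (by omega)

theorem hankelIdeal_le_iff {x : ℕ → A} {t n : ℕ} {J : Ideal A} :
    hankelIdeal x t n ≤ J ↔ ∀ g : Fin t → Fin n, hankelMinor x (fun j => g j) ∈ J := by
  rw [hankelIdeal, Ideal.span_le, Set.range_subset_iff]
  rfl

theorem hankelMinor_mem_hankelIdeal (x : ℕ → A) {t n : ℕ} {g : Fin t → ℕ} (hg : ∀ j, g j < n) :
    hankelMinor x g ∈ hankelIdeal x t n :=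
  hankelIdeal_le_iff.1 le_rfl fun j => ⟨g j, hg j⟩

theorem hankelIdeal_succ_le (x : ℕ → A) (t n : ℕ) :
    hankelIdeal x (t + 1) n ≤ hankelIdeal x t n := by
  refine hankelIdeal_le_iff.2 fun g => ?_
  rw [hankelMinor, det_succ_row _ (Fin.last t)]
  refine Ideal.sum_mem _ fun j _ => Ideal.mul_mem_left _ _ ?_
  convert hankelMinor_mem_hankelIdeal x fun i => (g (j.succAbove i)).2
  rw [hankelMinor]
  congr 1
  ext a b
  simp only [submatrix_apply, of_apply, Fin.succAbove_last, Fin.val_castSucc]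

theorem det_submatrix_eq_hankelMinor {s t n : ℕ} {H : Matrix (Fin s) (Fin n) A} {x : ℕ → A}
    (hH : ∀ a b, H a b = x (a + b)) {e : Fin t → Fin s} (he : ∀ i, (e i : ℕ) = i)
    (g : Fin t → Fin n) : (H.submatrix e g).det = hankelMinor x fun j => g j := by
  rw [hankelMinor]
  congr 1
  ext i j
  rw [submatrix_apply, of_apply, hH, he]

theorem span_range_det_submatrix_eq_hankelIdeal {s t n : ℕ} {H : Matrix (Fin s) (Fin n) A}
    {x : ℕ → A} (hH : ∀ a b, H a b = x (a + b)) {e : Fin t → Fin s} (he : ∀ i, (e i : ℕ) = i) :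
    Ideal.span (Set.range fun g : Fin t → Fin n => (H.submatrix e g).det) = hankelIdeal x t n := by
  simp only [hankelIdeal, det_submatrix_eq_hankelMinor hH he]

theorem span_map_det_submatrix_eq_map_hankelIdeal {s t n : ℕ} {H : Matrix (Fin s) (Fin n) A}
    {x : ℕ → A} (hH : ∀ a b, H a b = x (a + b)) {e : Fin t → Fin s} (he : ∀ i, (e i : ℕ) = i)
    (f : A →+* B) :
    Ideal.span {y | ∃ g : Fin t → Fin n, y = f (H.submatrix e g).det} =
      (hankelIdeal x t n).map f := by
  rw [← span_range_det_submatrix_eq_hankelIdeal hH he, Ideal.map_span, ← Set.range_comp]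
  simp only [Set.range, Function.comp_apply, eq_comm]

theorem hankelMinor_sum_geometric {r s : ℕ} (hrs : r < s) (y z : Fin r → A) (g : Fin s → ℕ) :
    hankelMinor (fun k => ∑ j, y j * z j ^ k) g = 0 := by
  have factorization : (Matrix.of fun i j : Fin s => ∑ l, y l * z l ^ ((i : ℕ) + g j)) =
      (Matrix.of fun (i : Fin s) l => z l ^ (i : ℕ)) * Matrix.of fun l j => y l * z l ^ g j := by
    ext i j
    simp only [mul_apply, of_apply]
    exact Finset.sum_congr rfl fun l _ => by ring
  rw [hankelMinor, factorization]
  exact det_mul_eq_zero_of_card_lt _ _ (by simpa using hrs)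

/-- The sequence whose leading `r × r` Hankel matrix is the exchange matrix. -/
def exchangeSeq (A : Type*) [CommRing A] (r k : ℕ) : A := if k + 1 = r then 1 else 0

theorem isUnit_hankelMinor_exchangeSeq (r : ℕ) :
    IsUnit (hankelMinor (exchangeSeq A r) (Fin.val : Fin r → ℕ)) := by
  have exchange : (Matrix.of fun i j : Fin r => exchangeSeq A r (i + j)) =
      (1 : Matrix (Fin r) (Fin r) A).submatrix Fin.revPerm id := by
    ext i j
    simp only [exchangeSeq, of_apply, submatrix_apply, one_apply, Fin.revPerm_apply, id,
      Fin.ext_iff, Fin.val_rev]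
    congr 1
    grind
  rw [hankelMinor, exchange, det_permute, det_one, mul_one]
  exact (Equiv.Perm.sign Fin.revPerm).isUnit.map (Int.castRingHom A)

theorem hankelMinor_exchangeSeq_of_lt {r s : ℕ} (hrs : r < s) (g : Fin s → ℕ) :
    hankelMinor (exchangeSeq A r) g = 0 := by
  refine det_eq_zero_of_row_eq_zero ⟨r, hrs⟩ fun j => if_neg ?_
  grind

end HankelIdeal

section GenericSequence

variable (R : Type*) [CommRing R]

/-- The generic sequence `X 0, ..., X (N - 1), 0, 0, ...`: the variables of the polynomial ring in
`N` variables, continued by zero. -/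
noncomputable def genericSeq (N k : ℕ) : MvPolynomial (Fin N) R :=
  if h : k < N then X ⟨k, h⟩ else 0

variable {R}

theorem genericSeq_of_lt {N k : ℕ} (h : k < N) : genericSeq R N k = X ⟨k, h⟩ := dif_pos h

theorem hankelMinor_genericSeq_notMem [Nontrivial R] {r n N : ℕ} (hr : 2 * r ≤ N + 1)
    (hN : n + r ≤ N) :
    hankelMinor (genericSeq R N) (Fin.val : Fin r → ℕ) ∉
      hankelIdeal (genericSeq R N) (r + 1) n := by
  let ev : MvPolynomial (Fin N) R →+* R := (aeval fun i : Fin N => exchangeSeq R r i).toRingHom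
  have hev (k : ℕ) (hk : k < N) : ev (genericSeq R N k) = exchangeSeq R r k := by
    simp [ev, genericSeq_of_lt hk]
  have hker : hankelIdeal (genericSeq R N) (r + 1) n ≤ RingHom.ker ev := by
    refine hankelIdeal_le_iff.2 fun g => ?_
    rw [RingHom.mem_ker, map_hankelMinor, hankelMinor_congr fun i j => hev _ (by omega)]
    exact hankelMinor_exchangeSeq_of_lt r.lt_succ_self _
  intro hmem
  have hzero := hker hmem
  rw [RingHom.mem_ker, map_hankelMinor, hankelMinor_congr fun i j => hev _ (by omega)] at hzero
  exact (isUnit_hankelMinor_exchangeSeq r).ne_zero hzero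

end GenericSequence

section Sparse

/-- A set of natural numbers without two consecutive elements. The main diagonals of the minors
of a Hankel matrix are the products of variables indexed by such sets. -/
def IsSparse (K : Finset ℕ) : Prop := ∀ a ∈ K, a + 1 ∉ K

theorem IsSparse.mono {K L : Finset ℕ} (hK : IsSparse K) (hLK : L ⊆ K) : IsSparse L :=
  fun a ha hmem => hK a (hLK ha) (hLK hmem)

theorem exists_isSparse_subset_forall_mem (S : Finset ℕ) :
    ∃ K ⊆ S, IsSparse K ∧ ∀ s ∈ S, ∃ a ∈ K, s = a ∨ s = a + 1 := by
  induction S using Finset.induction_on_max with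
  | empty => exact ⟨∅, subset_rfl, by simp [IsSparse], by simp⟩
  | insert b S hb ih =>
    obtain ⟨K, hKS, hK, hcover⟩ := ih
    by_cases hbK : ∃ a ∈ K, b = a ∨ b = a + 1
    · exact ⟨K, hKS.trans (Finset.subset_insert b S), hK, Finset.forall_mem_insert _ _ _ |>.2
        ⟨hbK, hcover⟩⟩
    · have hlt (k) (hk : k ∈ K) : k < b := hb k (hKS hk)
      refine ⟨insert b K, Finset.insert_subset_insert b hKS, fun a ha hmem => ?_,
        Finset.forall_mem_insert _ _ _ |>.2 ⟨⟨b, Finset.mem_insert_self b K, .inl rfl⟩,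
          fun s hs => (hcover s hs).imp fun a ha => ⟨Finset.mem_insert_of_mem ha.1, ha.2⟩⟩⟩
      rcases Finset.mem_insert.1 ha with rfl | haK <;>
        rcases Finset.mem_insert.1 hmem with heq | hmemK
      · omega
      · exact absurd (hlt _ hmemK) (by omega)
      · exact hbK ⟨a, haK, .inr heq.symm⟩
      · exact hK a haK hmemK

theorem IsSparse.exists_strictMono {K : Finset ℕ} {s : ℕ} (hK : IsSparse K) (hs : K.card = s) :
    ∃ g : Fin s → ℕ, StrictMono g ∧ ∀ i : Fin s, i + g i ∈ K := by
  let c := K.orderEmbOfFin hs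
  have hc (i) : c i ∈ K := K.orderEmbOfFin_mem hs i
  have hgap {i j : Fin s} (hij : i < j) : c i + 1 < c j :=
    lt_of_le_of_ne (c.strictMono hij) fun h => hK _ (hc i) (h ▸ hc j)
  obtain _ | s := s
  · exact ⟨finZeroElim, fun i => i.elim0, fun i => i.elim0⟩
  have hle (i : Fin (s + 1)) : (i : ℕ) ≤ c i := by
    induction i using Fin.induction with
    | zero => exact Nat.zero_le _
    | succ i ih =>
      have := hgap i.castSucc_lt_succ
      simp only [Fin.val_succ, Fin.val_castSucc] at ih ⊢
      omega
  refine ⟨fun i => c i - i, Fin.strictMono_iff_lt_succ.2 fun i => ?_, fun i => ?_⟩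
  · have := hle i.castSucc
    have := hgap i.castSucc_lt_succ
    simp only [Fin.val_succ, Fin.val_castSucc] at this ⊢
    grind
  · rw [Nat.add_sub_cancel' (hle i)]
    exact hc i

end Sparse

section Straightening

theorem sum_add_sq_perm_lt {s : ℕ} {g : Fin s → ℕ} (hg : StrictMono g)
    {τ : Equiv.Perm (Fin s)} (hτ : τ ≠ 1) :
    ∑ i, ((τ i : ℕ) + g i) ^ 2 < ∑ i : Fin s, ((i : ℕ) + g i) ^ 2 := by
  have sum_sq : ∑ i, (τ i : ℕ) ^ 2 = ∑ i : Fin s, (i : ℕ) ^ 2 :=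
    Equiv.sum_comp τ fun i : Fin s => (i : ℕ) ^ 2
  have monovary : Monovary (fun i : Fin s => (i : ℕ)) g := fun i j hij => (hg.lt_iff_lt.1 hij).le
  have sum_mul : ∑ i, (τ i : ℕ) * g i < ∑ i : Fin s, (i : ℕ) * g i := by
    refine monovary.sum_comp_perm_mul_lt_sum_mul_iff.2 fun hmono => hτ ?_
    have hτmono : StrictMono τ :=
      Monotone.strictMono_of_injective (fun i j hij => hij.eq_or_lt.elim (fun h => h ▸ le_rfl)
        fun h => hmono (hg h)) τ.injective
    exact DFunLike.coe_injective (le_antisymm hτmono.le_id hτmono.id_le)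
  simp only [add_sq, Finset.sum_add_distrib, mul_assoc, ← Finset.mul_sum, sum_sq]
  omega

variable {R : Type*} [CommRing R] {σ ι : Type*}

theorem det_X_eq_sum_monomial [Fintype ι] [DecidableEq ι] (v : ι → ι → σ) :
    (Matrix.of fun i j => (X (v i j) : MvPolynomial σ R)).det =
      ∑ τ : Equiv.Perm ι, Equiv.Perm.sign τ • monomial (∑ i, Finsupp.single (v (τ i) i) 1) 1 := by
  simp only [det_apply, of_apply, monomial_sum_one, X]

theorem sum_single_one_le [Fintype ι] {c : ι → σ} (hc : Function.Injective c) {m : σ →₀ ℕ}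
    (hm : ∀ i, m (c i) ≠ 0) : ∑ i, Finsupp.single (c i) 1 ≤ m := by
  classical
  intro k
  rw [Finsupp.finsetSum_apply]
  by_cases hk : ∃ i, c i = k
  · obtain ⟨i, rfl⟩ := hk
    rw [Fintype.sum_eq_single i fun j hj => Finsupp.single_eq_of_ne (hc.ne hj.symm)]
    simpa [Nat.one_le_iff_ne_zero] using hm i
  · rw [Finset.sum_eq_zero fun i _ => Finsupp.single_eq_of_ne fun h => hk ⟨i, h.symm⟩]
    exact Nat.zero_le _

theorem monomial_mem_sup_restrictSupport_of_det_mem [Fintype ι] [DecidableEq ι]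
    {J : Ideal (MvPolynomial σ R)} {v : ι → ι → σ} (hJ : (Matrix.of fun i j => X (v i j)).det ∈ J)
    {w : σ → ℕ} (hw : ∀ τ : Equiv.Perm ι, τ ≠ 1 → ∑ i, w (v (τ i) i) < ∑ i, w (v i i))
    {m : σ →₀ ℕ} (hm : ∑ i, Finsupp.single (v i i) 1 ≤ m) :
    monomial m 1 ∈ J.restrictScalars R ⊔
      restrictSupport R {m' | Finsupp.weight w m' < Finsupp.weight w m} := by
  obtain ⟨m, rfl⟩ := exists_add_of_le hm
  have leading : monomial (∑ i, Finsupp.single (v i i) 1 + m) (1 : R) =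
      (Matrix.of fun i j => X (v i j)).det * monomial m 1 -
        ∑ τ ∈ Finset.univ.erase (1 : Equiv.Perm ι), Equiv.Perm.sign τ •
          monomial (∑ i, Finsupp.single (v (τ i) i) 1 + m) (1 : R) := by
    rw [det_X_eq_sum_monomial, ← Finset.add_sum_erase _ _ (Finset.mem_univ (1 : Equiv.Perm ι)),
      add_mul, Finset.sum_mul]
    simp only [smul_mul_assoc, monomial_mul, mul_one, Equiv.Perm.sign_one, one_smul,
      Equiv.Perm.one_apply, add_sub_cancel_right]
  rw [leading]
  refine Submodule.sub_mem_sup (J.mul_mem_right _ hJ) (Submodule.sum_mem _ fun τ hτ => ?_)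
  rw [Units.smul_def]
  refine zsmul_mem ((monomial_mem_restrictSupport R).2 (.inl ?_)) _
  simpa [Finsupp.weight_single] using hw τ (Finset.ne_of_mem_erase hτ)

theorem sup_restrictSupport_eq_top (w : (σ →₀ ℕ) → ℕ) {S : Set (σ →₀ ℕ)}
    {J : Submodule R (MvPolynomial σ R)}
    (h : ∀ m ∉ S, monomial m 1 ∈ J ⊔ restrictSupport R {m' | w m' < w m}) :
    J ⊔ restrictSupport R S = ⊤ := by
  have monomial_mem (m : σ →₀ ℕ) : monomial m 1 ∈ J ⊔ restrictSupport R S := by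
    induction hm : w m using Nat.strong_induction_on generalizing m with
    | _ _ ih =>
      by_cases hmS : m ∈ S
      · exact Submodule.mem_sup_right ((monomial_mem_restrictSupport R).2 (.inl hmS))
      · refine sup_le (c := J ⊔ restrictSupport R S) le_sup_left ?_ (h m hmS)
        rw [restrictSupport_eq_span (R := R) {m' | _}, Submodule.span_le, Set.image_subset_iff]
        exact fun m' hm' => ih _ (hm ▸ hm') m' rfl
  rw [eq_top_iff, ← restrictSupport_univ, restrictSupport_eq_span, Submodule.span_le,
    Set.image_subset_iff]
  exact fun m _ => monomial_mem m

/-- Standard monomials: exponents whose support does not contain the main diagonal of an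
`(r + 1)`-minor of a Hankel matrix. -/
def IsStandard (r : ℕ) {N : ℕ} (m : Fin N →₀ ℕ) : Prop :=
  ∀ K ⊆ m.support.map Fin.valEmbedding, IsSparse K → K.card ≤ r

theorem hankelIdeal_sup_restrictSupport_eq_top (r n : ℕ) :
    (hankelIdeal (genericSeq R (n + r)) (r + 1) n).restrictScalars R ⊔
      restrictSupport R {m | IsStandard r m} = ⊤ := by
  let w : Fin (n + r) → ℕ := fun i => i ^ 2
  refine sup_restrictSupport_eq_top (Finsupp.weight w) fun m hm => ?_
  obtain ⟨K, hKm, hK, hcard⟩ : ∃ K ⊆ m.support.map Fin.valEmbedding, IsSparse K ∧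
      K.card = r + 1 := by
    simp only [Set.mem_ofPred_eq, IsStandard, not_forall, not_le] at hm
    obtain ⟨K, hKm, hK, hlt⟩ := hm
    obtain ⟨K', hK', hcard⟩ := Finset.exists_subset_card_eq (Nat.succ_le_of_lt hlt)
    exact ⟨K', hK'.trans hKm, hK.mono hK', hcard⟩
  obtain ⟨g, hg, hgK⟩ := hK.exists_strictMono hcard
  have hdiag (i : Fin (r + 1)) : ∃ h : i + g i < n + r, m ⟨i + g i, h⟩ ≠ 0 := by
    obtain ⟨j, hj, hji⟩ := Finset.mem_map.1 (hKm (hgK i))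
    exact ⟨hji ▸ j.2, by simpa [← hji] using hj⟩
  have hgn (i) : g i < n := by
    obtain ⟨h, -⟩ := hdiag (Fin.last r)
    have := hg.monotone i.le_last
    simp only [Fin.val_last] at h
    omega
  let v (i j : Fin (r + 1)) : Fin (n + r) := ⟨i + g j, by have := hgn j; omega⟩
  refine monomial_mem_sup_restrictSupport_of_det_mem (v := v) ?_ ?_ ?_
  · convert hankelMinor_mem_hankelIdeal (genericSeq R (n + r)) hgn using 1
    exact congrArg det (Matrix.ext fun i j => (genericSeq_of_lt _).symm)
  · exact fun τ hτ => sum_add_sq_perm_lt hg hτ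
  · refine sum_single_one_le (fun i j hij => ?_) fun i => (hdiag i).2
    exact (Fin.val_strictMono.add hg).injective (Fin.mk.inj hij)

end Straightening

section Independence

variable {R E σ : Type*} [CommRing R]

theorem coeff_aeval_eq_aeval_weightedHomogeneousComponent [CommRing E] [Algebra R E] {w : σ → ℕ}
    {q : σ → Polynomial E} (hq : ∀ i, Polynomial.X ^ w i ∣ q i) {f : MvPolynomial σ R} {d : ℕ}
    (hd : ∀ m ∈ f.support, d ≤ Finsupp.weight w m) :
    (aeval q f).coeff d =
      aeval (fun i => (q i).coeff (w i)) (weightedHomogeneousComponent w d f) := by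
  choose p hp using hq
  have aeval_monomial_eq (m : σ →₀ ℕ) (a : R) : aeval q (monomial m a) =
      Polynomial.X ^ Finsupp.weight w m *
        (Polynomial.C (algebraMap R E a) * m.prod fun i k => p i ^ k) := by
    rw [aeval_monomial, Polynomial.algebraMap_apply, mul_left_comm, Finsupp.weight_apply]
    congr 1
    simp only [hp, mul_pow, Finsupp.sum, Finsupp.prod, Finset.prod_mul_distrib, ← pow_mul,
      Finset.prod_pow_eq_pow_sum, smul_eq_mul, mul_comm (w _)]
  have coeff_zero (i) : (q i).coeff (w i) = (p i).coeff 0 := by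
    rw [hp, Polynomial.coeff_X_pow_mul', if_pos le_rfl, Nat.sub_self]
  rw [weightedHomogeneousComponent_apply, map_sum, Finset.sum_filter]
  nth_rw 1 [f.as_sum]
  rw [map_sum, Polynomial.finsetSum_coeff]
  refine Finset.sum_congr rfl fun m hm => ?_
  rw [aeval_monomial_eq, Polynomial.coeff_X_pow_mul']
  rcases (hd m hm).eq_or_lt with heq | hlt
  · simp only [← heq, le_rfl, Nat.sub_self, if_true, aeval_monomial, coeff_zero,
      Polynomial.coeff_C_mul, Finsupp.prod, Polynomial.coeff_zero_prod]
    simp only [← Polynomial.constantCoeff_apply, map_pow]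
  · rw [if_neg hlt.not_ge, if_neg hlt.ne']

theorem coeff_aeval_ite_X {s : Set σ} [DecidablePred (· ∈ s)] {m : σ →₀ ℕ}
    (hm : ∀ i ∈ m.support, i ∈ s) (f : MvPolynomial σ R) :
    coeff m (aeval (fun i => if i ∈ s then X i else 0) f : MvPolynomial σ R) = coeff m f := by
  classical
  induction f using MvPolynomial.induction_on' with
  | add p q hp hq => rw [map_add, coeff_add, coeff_add, hp, hq]
  | monomial m' a =>
    by_cases hm' : ∀ i ∈ m'.support, i ∈ s
    · rw [aeval_monomial, monomial_eq, Finsupp.prod_congr fun i hi => by rw [if_pos (hm' i hi)]]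
      rfl
    · have hne : m' ≠ m := fun h => hm' (h ▸ hm)
      push Not at hm'
      obtain ⟨i, hi, his⟩ := hm'
      rw [aeval_monomial, Finsupp.prod, Finset.prod_eq_zero hi, mul_zero, coeff_zero,
        coeff_monomial, if_neg hne]
      rw [if_neg his, zero_pow (Finsupp.mem_support_iff.1 hi)]

variable (R) in
/-- The parametrization of the Hankel variety by sums `∑ j, y j * z j ^ k` of `r` geometric
sequences. -/
noncomputable def geometricParam (r N : ℕ) :
    MvPolynomial (Fin N) R →ₐ[R] MvPolynomial (Fin r ⊕ Fin r) R :=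
  aeval fun i => ∑ j, X (Sum.inl j) * X (Sum.inr j) ^ (i : ℕ)

theorem hankelIdeal_le_ker_geometricParam {r n N : ℕ} (hN : n + r ≤ N) :
    hankelIdeal (genericSeq R N) (r + 1) n ≤ RingHom.ker (geometricParam R r N) := by
  refine hankelIdeal_le_iff.2 fun g => ?_
  rw [RingHom.mem_ker, ← AlgHom.coe_toRingHom, map_hankelMinor,
    ← hankelMinor_sum_geometric r.lt_succ_self (fun j => X (Sum.inl j)) (fun j => X (Sum.inr j))
      fun j => g j]
  refine hankelMinor_congr fun i j => ?_
  rw [genericSeq_of_lt (by omega), AlgHom.coe_toRingHom, geometricParam, aeval_X]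

theorem aeval_sum_geometric_eq_zero [CommRing E] [Algebra R E] {r N : ℕ}
    {f : MvPolynomial (Fin N) R} (hf : geometricParam R r N f = 0) {K : Finset ℕ} (hK : K.card ≤ r)
    (y z : ℕ → E) : aeval (fun i : Fin N => ∑ a ∈ K, y a * z a ^ (i : ℕ)) f = 0 := by
  obtain ⟨e⟩ : Nonempty (K ↪ Fin r) := Function.Embedding.nonempty_of_card_le (by simpa using hK)
  let ψ : MvPolynomial (Fin r ⊕ Fin r) R →ₐ[R] E := aeval (Sum.elim
    (Function.extend e (fun a => y a) 0) (Function.extend e (fun a => z a) 0))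
  have factorization : aeval (fun i : Fin N => ∑ a ∈ K, y a * z a ^ (i : ℕ)) =
      ψ.comp (geometricParam R r N) := by
    rw [geometricParam, comp_aeval]
    congr 1
    ext i
    simp only [map_sum, map_mul, map_pow, ψ, aeval_X, Sum.elim_inl, Sum.elim_inr]
    rw [← Finset.sum_coe_sort]
    refine Fintype.sum_of_injective e e.injective _ _ (fun j hj => ?_) fun a => ?_
    · rw [Function.extend_apply' _ _ _ hj, Pi.zero_apply, zero_mul]
    · rw [e.injective.extend_apply, e.injective.extend_apply]
  rw [factorization, AlgHom.comp_apply, hf, map_zero]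

/-- The weights for which the initial form of `y * z ^ i` only involves `i = a` and `i = a + 1`,
when `y` has weight `a * (a + 1)` and `z` has weight `2 * N - (2 * a + 1)`. -/
def hankelWeight (N i : ℕ) : ℕ := i * (2 * N - i)

theorem natCast_eq_hankelWeight_add {N a i : ℕ} (ha : a < N) (hi : i < N) :
    ((a * (a + 1) + (2 * N - (2 * a + 1)) * i : ℕ) : ℤ) =
      hankelWeight N i + ((i : ℤ) - a) * (i - (a + 1)) := by
  rw [hankelWeight]
  push_cast [show i ≤ 2 * N by omega, show 2 * a + 1 ≤ 2 * N by omega]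
  ring

theorem hankelWeight_le {N a i : ℕ} (ha : a < N) (hi : i < N) :
    hankelWeight N i ≤ a * (a + 1) + (2 * N - (2 * a + 1)) * i := by
  have nonneg : 0 ≤ ((i : ℤ) - a) * (i - (a + 1)) := by
    rcases le_or_gt i a with h | h
    · exact mul_nonneg_of_nonpos_of_nonpos (by omega) (by omega)
    · exact mul_nonneg (by omega) (by omega)
  have := natCast_eq_hankelWeight_add ha hi
  omega

theorem hankelWeight_eq_iff {N a i : ℕ} (ha : a < N) (hi : i < N) :
    hankelWeight N i = a * (a + 1) + (2 * N - (2 * a + 1)) * i ↔ i = a ∨ i = a + 1 := by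
  rw [← Nat.cast_inj (R := ℤ), natCast_eq_hankelWeight_add ha hi, left_eq_add, mul_eq_zero]
  omega

theorem exists_mul_pow_eq [Field E] {u v : E} (hu : u ≠ 0) (hv : v ≠ 0) (a : ℕ) :
    ∃ y z, y * z ^ a = u ∧ y * z ^ (a + 1) = v := by
  have hdiv : (v / u) ^ a ≠ 0 := pow_ne_zero a (div_ne_zero hv hu)
  exact ⟨u / (v / u) ^ a, v / u, div_mul_cancel₀ u hdiv, by
    rw [pow_succ, ← mul_assoc, div_mul_cancel₀ u hdiv, mul_div_cancel₀ v hu]⟩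

theorem aeval_ite_weightedHomogeneousComponent_eq_zero [Field E] [Algebra R E] {r N : ℕ}
    {f : MvPolynomial (Fin N) R} (hf : geometricParam R r N f = 0) {K : Finset ℕ}
    (hK : IsSparse K) (hcard : K.card ≤ r) (hKN : ∀ a ∈ K, a < N) {x : ℕ → E}
    (hx : ∀ k, x k ≠ 0) {d : ℕ}
    (hd : ∀ m ∈ f.support, d ≤ Finsupp.weight (fun i : Fin N => hankelWeight N i) m) :
    aeval (fun i : Fin N => if ∃ a ∈ K, (i : ℕ) = a ∨ (i : ℕ) = a + 1 then x i else 0)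
      (weightedHomogeneousComponent (fun i : Fin N => hankelWeight N i) d f) = 0 := by
  choose y z hy hz using fun a => exists_mul_pow_eq (hx a) (hx (a + 1)) a
  let Y (a : ℕ) : Polynomial E := Polynomial.C (y a) * Polynomial.X ^ (a * (a + 1))
  let Z (a : ℕ) : Polynomial E := Polynomial.C (z a) * Polynomial.X ^ (2 * N - (2 * a + 1))
  have term_eq (a i : ℕ) : Y a * Z a ^ i = Polynomial.C (y a * z a ^ i) *
      Polynomial.X ^ (a * (a + 1) + (2 * N - (2 * a + 1)) * i) := by
    simp only [Y, Z, mul_pow, map_mul, map_pow, pow_add, ← pow_mul]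
    ring
  have hdvd (i : Fin N) : Polynomial.X ^ hankelWeight N i ∣ ∑ a ∈ K, Y a * Z a ^ (i : ℕ) := by
    refine Finset.dvd_sum fun a ha => ?_
    rw [term_eq]
    exact (pow_dvd_pow _ (hankelWeight_le (hKN a ha) i.2)).mul_left _
  have hcoeff (i : Fin N) : (∑ a ∈ K, Y a * Z a ^ (i : ℕ)).coeff (hankelWeight N i) =
      if ∃ a ∈ K, (i : ℕ) = a ∨ (i : ℕ) = a + 1 then x i else 0 := by
    have coeff_term (a) (ha : a ∈ K) : (Y a * Z a ^ (i : ℕ)).coeff (hankelWeight N i) =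
        if (i : ℕ) = a ∨ (i : ℕ) = a + 1 then y a * z a ^ (i : ℕ) else 0 := by
      simp only [term_eq, Polynomial.coeff_C_mul_X_pow, hankelWeight_eq_iff (hKN a ha) i.2]
    rw [Polynomial.finsetSum_coeff, Finset.sum_congr rfl coeff_term]
    split_ifs with hi
    · obtain ⟨a, ha, hia⟩ := hi
      rw [Finset.sum_eq_single_of_mem a ha fun b hb hba => if_neg fun hib => ?_, if_pos hia]
      · rcases hia with h | h <;> rw [h]
        exacts [hy a, hz a]
      · have := hK a ha
        have := hK b hb
        grind
    · exact Finset.sum_eq_zero fun a ha => if_neg fun hia => hi ⟨a, ha, hia⟩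
  simp only [← hcoeff]
  rw [← coeff_aeval_eq_aeval_weightedHomogeneousComponent hdvd hd,
    aeval_sum_geometric_eq_zero hf hcard, Polynomial.coeff_zero]

theorem eq_zero_of_geometricParam_eq_zero [IsDomain R] {r N : ℕ} {f : MvPolynomial (Fin N) R}
    (hstd : ∀ m ∈ f.support, IsStandard r m) (hf : geometricParam R r N f = 0) : f = 0 := by
  by_contra hne
  let w (i : Fin N) : ℕ := hankelWeight N i
  obtain ⟨m, hm, hmin⟩ := f.support.exists_min_image (Finsupp.weight w) (support_nonempty.2 hne)
  obtain ⟨K, hKm, hK, hcover⟩ :=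
    exists_isSparse_subset_forall_mem (m.support.map Fin.valEmbedding)
  have hKN (a) (ha : a ∈ K) : a < N := by
    obtain ⟨i, -, rfl⟩ := Finset.mem_map.1 (hKm ha)
    exact i.2
  let E := FractionRing (MvPolynomial (Fin N) R)
  let x (k : ℕ) : E := if h : k < N then algebraMap (MvPolynomial (Fin N) R) E (X ⟨k, h⟩) else 1
  have hx (k) : x k ≠ 0 := by
    by_cases h : k < N <;> simp [x, h]
  let s : Set (Fin N) := {i | ∃ a ∈ K, (i : ℕ) = a ∨ (i : ℕ) = a + 1}
  have hzero :=
    aeval_ite_weightedHomogeneousComponent_eq_zero hf hK (hstd m hm K hKm hK) hKN hx hmin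
  classical
  have hfrac : (fun i : Fin N => if ∃ a ∈ K, (i : ℕ) = a ∨ (i : ℕ) = a + 1 then x i else 0) =
      algebraMap (MvPolynomial (Fin N) R) E ∘ fun i => if i ∈ s then X i else 0 := by
    ext i
    simp only [Function.comp_apply, s, Set.mem_ofPred_eq, x, i.2, dif_pos]
    split_ifs <;> simp
  rw [hfrac, aeval_algebraMap_apply, FaithfulSMul.algebraMap_eq_zero_iff] at hzero
  have hms : ∀ i ∈ m.support, i ∈ s := fun i hi => hcover i (Finset.mem_map_of_mem _ hi)
  have hcoeff := coeff_aeval_ite_X hms (weightedHomogeneousComponent w (Finsupp.weight w m) f)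
  rw [hzero, coeff_zero, coeff_weightedHomogeneousComponent, if_pos rfl] at hcoeff
  exact mem_support_iff.1 hm hcoeff.symm

theorem hankelIdeal_genericSeq_eq_ker [IsDomain R] (r n : ℕ) :
    hankelIdeal (genericSeq R (n + r)) (r + 1) n = RingHom.ker (geometricParam R r (n + r)) := by
  refine Submodule.restrictScalars_injective R _ _ ?_
  refine eq_of_le_of_inf_le_of_le_sup (z := restrictSupport R {m | IsStandard r m})
    (hankelIdeal_le_ker_geometricParam le_rfl) ?_ ?_
  · rintro f ⟨hf, hstd⟩
    obtain rfl : f = 0 := eq_zero_of_geometricParam_eq_zero hstd hf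
    exact zero_mem _
  · rw [hankelIdeal_sup_restrictSupport_eq_top]
    exact le_top

theorem isPrime_hankelIdeal_genericSeq [IsDomain R] (r n : ℕ) :
    (hankelIdeal (genericSeq R (n + r)) (r + 1) n).IsPrime := by
  rw [hankelIdeal_genericSeq_eq_ker]
  exact RingHom.ker_isPrime _

end Independence

section Recurrence

variable {A : Type*} [CommRing A] {x : ℕ → A}

theorem hankelMinor_eq_zero_iff_exists_column_relation [IsDomain A] {t : ℕ} {g : Fin t → ℕ} :
    hankelMinor x g = 0 ↔ ∃ c : Fin t → A, c ≠ 0 ∧ ∀ i : Fin t, ∑ j, x (i + g j) * c j = 0 := by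
  simp only [hankelMinor, ← exists_mulVec_eq_zero_iff, funext_iff, mulVec, dotProduct, of_apply,
    Pi.zero_apply, ne_eq]

theorem hankelMinor_eq_zero_iff_exists_row_relation [IsDomain A] {t : ℕ} {g : Fin t → ℕ} :
    hankelMinor x g = 0 ↔ ∃ v : Fin t → A, v ≠ 0 ∧ ∀ j, ∑ i : Fin t, v i * x (i + g j) = 0 := by
  simp only [hankelMinor, ← exists_vecMul_eq_zero_iff, funext_iff, vecMul, dotProduct, of_apply,
    Pi.zero_apply, ne_eq]

theorem sum_recurrence_mul_eq_zero {s t u d : ℕ} (v : Fin s → A) {g : Fin u → ℕ} {c : Fin u → A}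
    (hc : ∀ i : Fin t, ∑ j, x (i + g j) * c j = 0) (hd : s + d ≤ t) :
    ∑ j, (∑ i : Fin s, v i * x (i + (g j + d))) * c j = 0 := by
  simp only [Finset.sum_mul, mul_assoc]
  rw [Finset.sum_comm]
  refine Finset.sum_eq_zero fun i _ => ?_
  rw [← Finset.mul_sum]
  convert mul_zero (v i)
  convert hc ⟨i + d, by omega⟩ using 4
  grind

theorem recurrence_succ [IsDomain A] {r s : ℕ} (hrs : r ≤ s) {v : Fin (r + 1) → A}
    (hv : ∀ k ≤ s, ∑ i : Fin (r + 1), v i * x (i + k) = 0)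
    (hminor : hankelMinor x (Fin.snoc (Fin.snoc Fin.val s) (s + 1) : Fin (r + 2) → ℕ) = 0)
    (hlead : hankelMinor x (Fin.val : Fin r → ℕ) ≠ 0) :
    ∑ i : Fin (r + 1), v i * x (i + (s + 1)) = 0 := by
  -- Pairing a column relation with the recurrence and with its shift by one would kill the last two
  -- coefficients, leaving a relation between the columns of the leading minor.
  by_contra hne
  obtain ⟨c, hc0, hc⟩ := hankelMinor_eq_zero_iff_exists_column_relation.1 hminor
  have split_sum (φ : ℕ → A) (d : ℕ) :
      ∑ j, φ ((Fin.snoc (Fin.snoc Fin.val s) (s + 1) : Fin (r + 2) → ℕ) j + d) * c j =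
        ∑ j : Fin r, φ (j + d) * c j.castSucc.castSucc + φ (s + d) * c (Fin.last r).castSucc +
          φ (s + 1 + d) * c (Fin.last (r + 1)) := by
    simp only [Fin.sum_univ_castSucc, Fin.snoc_castSucc, Fin.snoc_last]
  have combined {d : ℕ} (hd : d ≤ 1) := sum_recurrence_mul_eq_zero v hc (d := d) (by omega)
  have head (d : ℕ) (hd : d ≤ 1) : ∑ j : Fin r,
      (∑ i : Fin (r + 1), v i * x (i + (j + d))) * c j.castSucc.castSucc = 0 :=
    Finset.sum_eq_zero fun j _ => by rw [hv _ (by omega), zero_mul]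
  have last_zero : c (Fin.last (r + 1)) = 0 := by
    have h := combined zero_le_one
    rw [split_sum fun k => ∑ i : Fin (r + 1), v i * x (i + k), head 0 zero_le_one] at h
    simpa [hv s le_rfl, hne] using h
  have penultimate_zero : c (Fin.last r).castSucc = 0 := by
    have h := combined le_rfl
    rw [split_sum fun k => ∑ i : Fin (r + 1), v i * x (i + k), head 1 le_rfl] at h
    simpa [last_zero, hne] using h
  refine hlead (hankelMinor_eq_zero_iff_exists_column_relation.2
    ⟨fun j => c j.castSucc.castSucc, fun h => hc0 ?_, fun i => ?_⟩)
  · funext j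
    induction j using Fin.lastCases with
    | last => exact last_zero
    | cast j =>
      induction j using Fin.lastCases with
      | last => exact penultimate_zero
      | cast j => exact congrFun h j
  · have h := hc i.castSucc.castSucc
    simpa [Fin.sum_univ_castSucc, last_zero, penultimate_zero] using h

theorem hankelIdeal_eq_bot_of_hankelMinor_eq_zero [IsDomain A] {r n : ℕ}
    (hminors : hankelIdeal x (r + 2) n = ⊥)
    (hzero : hankelMinor x (Fin.val : Fin (r + 1) → ℕ) = 0)
    (hlead : hankelMinor x (Fin.val : Fin r → ℕ) ≠ 0) : hankelIdeal x (r + 1) n = ⊥ := by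
  obtain ⟨v, hv0, hv⟩ := hankelMinor_eq_zero_iff_exists_row_relation.1 hzero
  have recurrence (k : ℕ) : k < n → ∑ i : Fin (r + 1), v i * x (i + k) = 0 := by
    induction k using Nat.strong_induction_on with
    | _ k ih =>
      intro hk
      obtain hkr | ⟨s, hrs, rfl⟩ : k ≤ r ∨ ∃ s, r ≤ s ∧ k = s + 1 := by
        cases k <;> grind
      · exact hv ⟨k, by omega⟩
      · refine recurrence_succ hrs (fun l hl => ih l (by omega) (by omega)) ?_ hlead
        rw [← Ideal.mem_bot, ← hminors]
        refine hankelMinor_mem_hankelIdeal x fun j => ?_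
        induction j using Fin.lastCases with
        | last => simpa using hk
        | cast j => induction j using Fin.lastCases <;> simp <;> omega
  rw [eq_bot_iff, hankelIdeal_le_iff]
  exact fun g => hankelMinor_eq_zero_iff_exists_row_relation.2
    ⟨v, hv0, fun j => recurrence _ (g j).2⟩

theorem hankelIdeal_le_of_hankelMinor_mem {q : Ideal A} [q.IsPrime] {r n : ℕ}
    (hle : hankelIdeal x (r + 2) n ≤ q)
    (hmem : hankelMinor x (Fin.val : Fin (r + 1) → ℕ) ∈ q)
    (hlead : hankelMinor x (Fin.val : Fin r → ℕ) ∉ q) : hankelIdeal x (r + 1) n ≤ q := by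
  have vanishes {t m : ℕ} : hankelIdeal x t m ≤ q ↔
      hankelIdeal (fun k => Ideal.Quotient.mk q (x k)) t m = ⊥ := by
    rw [← map_hankelIdeal, Ideal.map_eq_bot_iff_le_ker, Ideal.mk_ker]
  rw [← Ideal.Quotient.eq_zero_iff_mem, map_hankelMinor] at hmem hlead
  exact vanishes.2 (hankelIdeal_eq_bot_of_hankelMinor_eq_zero (vanishes.1 hle) hmem hlead)

end Recurrence

theorem height_le_one_of_mem_minimalPrimes_span_singleton (k : Type*) {A : Type*} [CommRing k]
    [IsDomain k] [CommRing A] [Algebra k A] [Algebra.FiniteType k A] {a : A} {p : Ideal A}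
    (hp : p ∈ (Ideal.span {a}).minimalPrimes) (hk : p.under k = ⊥) : p.height ≤ 1 := by
  have := hp.isPrime
  let M := Algebra.algebraMapSubmonoid A (nonZeroDivisors k)
  have disjoint : Disjoint (M : Set A) p := by
    rw [Set.disjoint_left]
    rintro _ ⟨c, hc, rfl⟩ hcp
    have hc0 : c ∈ p.under k := hcp
    rw [hk, Ideal.mem_bot] at hc0
    exact nonZeroDivisors.ne_zero hc hc0
  have : Algebra.EssFiniteType k (Localization M) := .comp k A _
  have : Algebra.EssFiniteType (FractionRing k) (Localization M) := .of_comp k _ _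
  have := Algebra.EssFiniteType.isNoetherianRing (FractionRing k) (Localization M)
  rw [← IsLocalization.height_map_of_disjoint (S := Localization M) M p disjoint]
  refine Ideal.height_le_one_of_isPrincipal_of_mem_minimalPrimes
    ((Ideal.span {a}).map (algebraMap A (Localization M))) _ ?_
  rwa [IsLocalization.minimalPrimes_map M, Set.mem_preimage,
    IsLocalization.under_map_of_isPrime_disjoint M _ ‹p.IsPrime› disjoint]

theorem height_eq_one_of_mem_minimalPrimes_span_singleton (k : Type*) {A : Type*} [CommRing k]
    [IsDomain k] [CommRing A] [IsDomain A] [Algebra k A] [Algebra.FiniteType k A] {a : A}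
    {p : Ideal A} (hp : p ∈ (Ideal.span {a}).minimalPrimes) (hk : p.under k = ⊥) (ha : a ≠ 0) :
    p.height = 1 := by
  have := hp.isPrime
  refine le_antisymm (height_le_one_of_mem_minimalPrimes_span_singleton k hp hk) ?_
  have bot_lt : ⊥ < p := by
    refine bot_lt_iff_ne_bot.2 fun h => ha ?_
    rw [← Ideal.mem_bot, ← h]
    exact hp.le (Ideal.mem_span_singleton_self a)
  simpa using Ideal.height_add_one_le_of_lt_of_isPrime bot_lt

theorem sInf_orderHeight_eq_height {A : Type*} [CommRing A] (p : Ideal A) [hp : p.IsPrime] :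
    sInf {h : ℕ∞ | ∃ q : PrimeSpectrum A, p ≤ q.asIdeal ∧ h = Order.height q} = p.height := by
  have height_eq : p.height = Order.height (⟨p, hp⟩ : PrimeSpectrum A) :=
    PrimeSpectrum.height_eq_orderHeight ⟨p, hp⟩
  rw [height_eq]
  refine le_antisymm (sInf_le ⟨⟨p, hp⟩, le_rfl, rfl⟩) (le_sInf ?_)
  rintro _ ⟨q, hpq, rfl⟩
  exact Order.height_mono hpq

section Quotient

variable (R : Type*) [CommRing R]

/-- Reduction of polynomials modulo `I` on coefficients, as an isomorphism of algebras over a base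
ring: `A[X] / I A[X] ≃ (A / I)[X]`. -/
noncomputable def polynomialQuotientAlgEquiv {A : Type*} [CommRing A] [Algebra R A] (I : Ideal A) :
    (Polynomial A ⧸ I.map (Polynomial.C : A →+* Polynomial A)) ≃ₐ[R] Polynomial (A ⧸ I) :=
  AlgEquiv.ofRingEquiv (f := I.polynomialQuotientEquivQuotientPolynomial.symm) fun a => by
    change I.polynomialQuotientEquivQuotientPolynomial.symm
      (Ideal.Quotient.mk _ (Polynomial.C (algebraMap R A a))) = _
    rw [Ideal.polynomialQuotientEquivQuotientPolynomial_symm_mk, Polynomial.map_C]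
    rfl

/-- A polynomial ring in `N + 1` variables as the polynomial ring in its last variable over the
polynomial ring in the others. -/
noncomputable def splitLastVariable (N : ℕ) :
    MvPolynomial (Fin (N + 1)) R ≃ₐ[R] Polynomial (MvPolynomial (Fin N) R) :=
  (renameEquiv R finSuccEquivLast).trans (optionEquivLeft R (Fin N))

theorem splitLastVariable_genericSeq {N k : ℕ} (hk : k < N) :
    splitLastVariable R N (genericSeq R (N + 1) k) = Polynomial.C (genericSeq R N k) := by
  rw [genericSeq_of_lt hk, genericSeq_of_lt (hk.trans N.lt_succ_self), splitLastVariable,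
    AlgEquiv.trans_apply, renameEquiv_apply, rename_X]
  exact (congrArg _ (congrArg X (finSuccEquivLast_castSucc ⟨k, hk⟩))).trans
    (optionEquivLeft_X_some ..)

theorem map_splitLastVariable_hankelIdeal {t n N : ℕ} (hN : t + n ≤ N + 1) :
    (hankelIdeal (genericSeq R (N + 1)) t n).map (splitLastVariable R N : _ →+* _) =
      (hankelIdeal (genericSeq R N) t n).map Polynomial.C := by
  rw [map_hankelIdeal, map_hankelIdeal]
  exact hankelIdeal_congr fun k hk => splitLastVariable_genericSeq R (by omega)

/-- A Hankel determinantal ring with one additional variable, not occurring in the matrix, is a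
polynomial ring over the original one. -/
noncomputable def hankelQuotientSuccEquiv {t n N : ℕ} (hN : t + n ≤ N + 1) :
    (MvPolynomial (Fin (N + 1)) R ⧸ hankelIdeal (genericSeq R (N + 1)) t n) ≃ₐ[R]
      Polynomial (MvPolynomial (Fin N) R ⧸ hankelIdeal (genericSeq R N) t n) :=
  (Ideal.quotientEquivAlg _ _ (splitLastVariable R N)
    (map_splitLastVariable_hankelIdeal R hN).symm).trans (polynomialQuotientAlgEquiv R _)

/-- Passing from the maximal minors of the `(t + 1) × n` Hankel matrix to those of its first `t`
rows is a further quotient, by the image of the latter ideal. -/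
noncomputable def hankelQuotientQuotientEquiv {A : Type*} [CommRing A] [Algebra R A] (x : ℕ → A)
    (t n : ℕ) :
    ((A ⧸ hankelIdeal x (t + 1) n) ⧸
        (hankelIdeal x t n).map (Ideal.Quotient.mk (hankelIdeal x (t + 1) n))) ≃ₐ[R]
      A ⧸ hankelIdeal x t n :=
  (DoubleQuot.quotQuotEquivQuotSupₐ R _ _).trans
    (Ideal.quotientEquivAlgOfEq R (sup_eq_right.2 (hankelIdeal_succ_le x t n)))

/-- The ideal `p` generated by the maximal minors of the first `r + 1` rows, in the determinantal
ring of the generic `(r + 2) × n` Hankel matrix. -/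
noncomputable abbrev leadingRowsIdeal (r n : ℕ) :
    Ideal (MvPolynomial (Fin (n + r + 1)) R ⧸ hankelIdeal (genericSeq R (n + r + 1)) (r + 2) n) :=
  (hankelIdeal (genericSeq R (n + r + 1)) (r + 1) n).map (Ideal.Quotient.mk _)

/-- The isomorphism of `R / p` with a polynomial ring in one variable over the Hankel determinantal
ring with one row less, for the generic Hankel matrix with `r + 2` rows. -/
noncomputable def hankelQuotientQuotientEquivPolynomial (r n : ℕ) :
    ((MvPolynomial (Fin (n + r + 1)) R ⧸ hankelIdeal (genericSeq R (n + r + 1)) (r + 2) n) ⧸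
        leadingRowsIdeal R r n) ≃ₐ[R]
      Polynomial (MvPolynomial (Fin (n + r)) R ⧸ hankelIdeal (genericSeq R (n + r)) (r + 1) n) :=
  (hankelQuotientQuotientEquiv R _ (r + 1) n).trans (hankelQuotientSuccEquiv R (by omega))

theorem hankelIdeal_genericSeq_le_ker_constantCoeff (t n N : ℕ) :
    hankelIdeal (genericSeq R N) (t + 1) n ≤ RingHom.ker (constantCoeff (σ := Fin N)) := by
  refine hankelIdeal_le_iff.2 fun g => ?_
  rw [RingHom.mem_ker, map_hankelMinor]
  refine det_eq_zero_of_row_eq_zero 0 fun j => ?_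
  simp only [of_apply, genericSeq]
  split <;> simp

end Quotient

section Height

variable {R : Type*} [CommRing R] [IsDomain R]

theorem isPrime_leadingRowsIdeal (r n : ℕ) : (leadingRowsIdeal R r n).IsPrime := by
  have := isPrime_hankelIdeal_genericSeq (R := R) r n
  rw [← Ideal.Quotient.isDomain_iff_prime]
  exact (hankelQuotientQuotientEquivPolynomial R r n).toMulEquiv.isDomain _

theorem leadingRowsIdeal_mem_minimalPrimes {r n : ℕ} (hrn : r < n) :
    leadingRowsIdeal R r n ∈
      (Ideal.span {Ideal.Quotient.mk (hankelIdeal (genericSeq R (n + r + 1)) (r + 2) n)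
        (hankelMinor (genericSeq R (n + r + 1)) (Fin.val : Fin (r + 1) → ℕ))}).minimalPrimes := by
  set x := genericSeq R (n + r + 1)
  refine ⟨⟨isPrime_leadingRowsIdeal r n, ?_⟩, ?_⟩
  · rw [Ideal.span_singleton_le_iff_mem]
    exact Ideal.mem_map_of_mem _ (hankelMinor_mem_hankelIdeal x fun j => by omega)
  · rintro q ⟨hq, hΔq⟩ hqp
    rw [Ideal.span_singleton_le_iff_mem, map_hankelMinor] at hΔq
    rw [leadingRowsIdeal, map_hankelIdeal]
    refine hankelIdeal_le_of_hankelMinor_mem ?_ hΔq fun hlead => ?_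
    · rw [← map_hankelIdeal, Ideal.map_quotient_self]
      exact bot_le
    · have hmem := hqp hlead
      rw [← map_hankelMinor, Ideal.mem_quotient_iff_mem (hankelIdeal_succ_le x (r + 1) n)] at hmem
      exact hankelMinor_genericSeq_notMem (by omega) (by omega) hmem

theorem height_leadingRowsIdeal {r n : ℕ} (hrn : r < n) : (leadingRowsIdeal R r n).height = 1 := by
  have : (hankelIdeal (genericSeq R (n + r + 1)) (r + 2) n).IsPrime :=
    isPrime_hankelIdeal_genericSeq (r + 1) n
  refine height_eq_one_of_mem_minimalPrimes_span_singleton R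
    (leadingRowsIdeal_mem_minimalPrimes hrn) (eq_bot_iff.2 fun c hc => ?_) ?_
  · have hmem := (Ideal.mem_quotient_iff_mem (hankelIdeal_succ_le _ (r + 1) n)).1 hc
    simpa using hankelIdeal_genericSeq_le_ker_constantCoeff R r n _ hmem
  · rw [ne_eq, Ideal.Quotient.eq_zero_iff_mem]
    exact hankelMinor_genericSeq_notMem (by omega) (by omega)

end Height

theorem hankel_quotient_by_p_general (F : Type*) [CommRing F] [IsDomain F] (r n : ℕ) (hrn : r < n)
    (H : Matrix (Fin (r + 2)) (Fin n) (MvPolynomial (Fin (n + r + 1)) F))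
    (hH : ∀ a b, H a b = X ⟨(a : ℕ) + (b : ℕ), by omega⟩)
    (I : Ideal (MvPolynomial (Fin (n + r + 1)) F))
    (hI : I = Ideal.span (Set.range fun g : Fin (r + 2) → Fin n => (H.submatrix id g).det))
    (p : Ideal (MvPolynomial (Fin (n + r + 1)) F ⧸ I))
    (hp : p = Ideal.span {x | ∃ g : Fin (r + 1) → Fin n,
      x = Ideal.Quotient.mk I (H.submatrix Fin.castSucc g).det})
    (H' : Matrix (Fin (r + 1)) (Fin n) (MvPolynomial (Fin (n + r)) F))
    (hH' : ∀ a b, H' a b = X ⟨(a : ℕ) + (b : ℕ), by omega⟩)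
    (I' : Ideal (MvPolynomial (Fin (n + r)) F))
    (hI' : I' = Ideal.span (Set.range fun g : Fin (r + 1) → Fin n => (H'.submatrix id g).det)) :
    (Nonempty (((MvPolynomial (Fin (n + r + 1)) F ⧸ I) ⧸ p) ≃ₐ[F]
        Polynomial (MvPolynomial (Fin (n + r)) F ⧸ I'))) ∧
    p.IsPrime ∧
    sInf {h : ℕ∞ | ∃ q : PrimeSpectrum (MvPolynomial (Fin (n + r + 1)) F ⧸ I),
        p ≤ q.asIdeal ∧ h = Order.height q} = 1 := by
  have hHx (a b) : H a b = genericSeq F (n + r + 1) (a + b) := by rw [hH, genericSeq_of_lt]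
  have hHx' (a b) : H' a b = genericSeq F (n + r) (a + b) := by rw [hH', genericSeq_of_lt]
  obtain rfl : I = hankelIdeal (genericSeq F (n + r + 1)) (r + 2) n :=
    hI.trans (span_range_det_submatrix_eq_hankelIdeal hHx fun _ => rfl)
  obtain rfl : I' = hankelIdeal (genericSeq F (n + r)) (r + 1) n :=
    hI'.trans (span_range_det_submatrix_eq_hankelIdeal hHx' fun _ => rfl)
  obtain rfl : p = leadingRowsIdeal F r n :=
    hp.trans (span_map_det_submatrix_eq_map_hankelIdeal hHx Fin.val_castSucc _)
  have hprime := isPrime_leadingRowsIdeal (R := F) r n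
  refine ⟨⟨hankelQuotientQuotientEquivPolynomial F r n⟩, hprime, ?_⟩
  rw [sInf_orderHeight_eq_height]
  exact height_leadingRowsIdeal hrn

/-- Let `R` be the `t×n` Hankel determinantal ring (`2 ≤ t ≤ n`) and `p ⊆ R` the ideal
generated by the `(t-1)`-minors of the first `t-1` rows of the Hankel matrix.  Then `R/p` is
isomorphic as an `F`-algebra to a polynomial ring in one variable over the `(t-1)×n` Hankel
determinantal ring; consequently `p` is prime of height `1`. -/
theorem hankel_quotient_by_p (F : Type*) [Field F] (t n : ℕ) (ht : 2 ≤ t) (htn : t ≤ n)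
    (H : Matrix (Fin t) (Fin n) (MvPolynomial (Fin (n + t - 1)) F))
    (hH : ∀ a b, H a b = X ⟨(a : ℕ) + (b : ℕ), by have := a.2; have := b.2; omega⟩)
    (I : Ideal (MvPolynomial (Fin (n + t - 1)) F))
    (hI : I = Ideal.span (Set.range fun g : Fin t → Fin n => (H.submatrix id g).det))
    (p : Ideal (MvPolynomial (Fin (n + t - 1)) F ⧸ I))
    (hp : p = Ideal.span {x | ∃ g : Fin (t - 1) → Fin n,
      x = Ideal.Quotient.mk I
        ((H.submatrix (fun i : Fin (t - 1) => (⟨i.1, by have := i.2; omega⟩ : Fin t)) g).det)})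
    (H' : Matrix (Fin (t - 1)) (Fin n) (MvPolynomial (Fin (n + t - 2)) F))
    (hH' : ∀ a b, H' a b = X ⟨(a : ℕ) + (b : ℕ), by have := a.2; have := b.2; omega⟩)
    (I' : Ideal (MvPolynomial (Fin (n + t - 2)) F))
    (hI' : I' = Ideal.span (Set.range fun g : Fin (t - 1) → Fin n => (H'.submatrix id g).det)) :
    (Nonempty (((MvPolynomial (Fin (n + t - 1)) F ⧸ I) ⧸ p) ≃ₐ[F]
        Polynomial (MvPolynomial (Fin (n + t - 2)) F ⧸ I'))) ∧
    p.IsPrime ∧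
    sInf {h : ℕ∞ | ∃ q : PrimeSpectrum (MvPolynomial (Fin (n + t - 1)) F ⧸ I),
        p ≤ q.asIdeal ∧ h = Order.height q} = 1 := by
  obtain ⟨r, rfl⟩ := Nat.exists_eq_add_of_le' ht
  exact hankel_quotient_by_p_general F r n (by omega) H hH I hI p hp H' hH' I' hI'
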